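/- arXiv:1412.7363 — 6 statements merged into one kernel-verified Lean document; each statement's English description precedes it below -/
import Mathlib

section
/- Let r ≥ 1 and n₁, …, n_r ≥ 0 be integers, let b₁, …, b_r be nonzero real numbers, let y₁, …, y_r and x be real numbers. Define Î = (1/(n₁!⋯n_r!))·∫_0^x B_{n₁}(b₁z+y₁)⋯B_{n_r}(b_rz+y_r) dz, and for nonnegative integers m₁, …, m_r define Ĉ_{m₁,…,m_r} = (1/(m₁!⋯m_r!))·( ∏_{l=1}^r B_{m_l}(b_l x + y_l) − ∏_{l=1}^r B_{m_l}(y_l) ) (with the understanding that b_r is paired with index m_r, etc.). Then Î = Σ_{a=0}^{n₁+⋯+n_{r−1}} (−1)^a · Σ_{j₁+⋯+j_{r−1}=a, 0≤j_l≤n_l} ( a!/(j₁!⋯j_{r−1}!) ) · b₁^{j₁}⋯b_{r−1}^{j_{r−1}} · b_r^{−a−1} · Ĉ_{n₁−j₁, …, n_{r−1}−j_{r−1}, n_r+a+1}. -/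
open Finset

/-- The `n`-th Bernoulli polynomial evaluated at a real number. -/
noncomputable def BPoly (n : ℕ) (x : ℝ) : ℝ :=
  Polynomial.eval x ((Polynomial.bernoulli n).map (algebraMap ℚ ℝ))

/-- The quantity `Ĉ_{m₁,…,m_{r}}(x;b;y)` for `r = m + 1` factors. -/
noncomputable def Chat (m : ℕ) (b y : Fin (m + 1) → ℝ) (x : ℝ) (mv : Fin (m + 1) → ℕ) : ℝ :=
  (1 / ∏ l, ((mv l).factorial : ℝ)) *
    (∏ l, BPoly (mv l) (b l * x + y l) - ∏ l, BPoly (mv l) (y l))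

/-- The right-hand side `T_{n₁,…,n_r}(x;b;y)` of the product-integral formula,
for `r = m + 1` factors. -/
noncomputable def Tsum (m : ℕ) (n : Fin (m + 1) → ℕ) (b y : Fin (m + 1) → ℝ) (x : ℝ) : ℝ :=
  ∑ a ∈ Finset.range ((∑ l : Fin m, n l.castSucc) + 1), (-1 : ℝ) ^ a *
    ∑ j ∈ (Fintype.piFinset fun l : Fin m => Finset.range (n l.castSucc + 1)).filter
        (fun j => ∑ l, j l = a),
      ((a.factorial : ℝ) / ∏ l, ((j l).factorial : ℝ)) *
        (∏ l, b l.castSucc ^ j l) * b (Fin.last m) ^ (-(a : ℤ) - 1) *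
        Chat m b y x (Fin.snoc (fun l : Fin m => n l.castSucc - j l) (n (Fin.last m) + a + 1))

namespace IPB
open Polynomial

/-- normalized Bernoulli polynomial over the reals -/
noncomputable def beta (k : ℕ) : ℝ[X] :=
  C (1 / (k.factorial : ℝ)) * (Polynomial.bernoulli k).map (algebraMap ℚ ℝ)

lemma beta_zero : beta 0 = 1 := by simp [beta]

lemma derivative_beta_succ (k : ℕ) : derivative (beta (k + 1)) = beta k := by
  unfold beta
  rw [derivative_C_mul, derivative_map, derivative_bernoulli_add_one, Polynomial.map_mul]
  have h : ((k + 1 : ℚ[X])).map (algebraMap ℚ ℝ) = C ((k : ℝ) + 1) := by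
    simp
  rw [h, ← mul_assoc, ← C_mul]
  congr 2
  rw [Nat.factorial_succ]
  push_cast
  have := Nat.factorial_ne_zero k
  field_simp

/-- composed factor -/
noncomputable def fac (k : ℕ) (b y : ℝ) : ℝ[X] := (beta k).comp (C b * X + C y)

lemma eval_fac (k : ℕ) (b y z : ℝ) :
    (fac k b y).eval z = BPoly k (b * z + y) / (k.factorial : ℝ) := by
  simp [fac, beta, BPoly, eval_comp]
  ring

lemma derivative_fac_succ (k : ℕ) (b y : ℝ) :
    derivative (fac (k + 1) b y) = C b * fac k b y := by
  simp [fac, derivative_comp, derivative_beta_succ]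

lemma derivative_fac_zero (b y : ℝ) : derivative (fac 0 b y) = 0 := by
  simp [fac, beta_zero]

lemma iter_fac_le (b y : ℝ) (k j : ℕ) (h : j ≤ k) :
    derivative^[j] (fac k b y) = C (b ^ j) * fac (k - j) b y := by
  induction j with
  | zero => simp
  | succ j ih =>
    rw [Function.iterate_succ_apply', ih (by omega), derivative_C_mul]
    obtain ⟨i, rfl⟩ : ∃ i, k = i + 1 + j := ⟨k - j - 1, by omega⟩
    rw [show i + 1 + j - j = i + 1 by omega, show i + 1 + j - (j + 1) = i by omega,
      derivative_fac_succ, ← mul_assoc, ← C_mul, pow_succ]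

lemma iter_fac_gt (b y : ℝ) (k j : ℕ) (h : k < j) :
    derivative^[j] (fac k b y) = 0 := by
  obtain ⟨i, rfl⟩ : ∃ i, j = i + (k + 1) := ⟨j - k - 1, by omega⟩
  rw [Function.iterate_add_apply, Function.iterate_succ_apply', iter_fac_le b y k k le_rfl,
    derivative_C_mul, Nat.sub_self, derivative_fac_zero, mul_zero]
  simp

lemma taylor_coeff_eq (p : ℝ[X]) (z : ℝ) (j : ℕ) :
    (taylor z p).coeff j = (derivative^[j] p).eval z / (j.factorial : ℝ) := by
  rw [taylor_coeff, ← factorial_smul_hasseDeriv]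
  have := Nat.factorial_ne_zero j
  simp [eval_smul]
  field_simp

lemma eval_iter_prod (m : ℕ) (p : Fin m → ℝ[X]) (z : ℝ) (a : ℕ) :
    (derivative^[a] (∏ l, p l)).eval z = (a.factorial : ℝ) *
      ∑ j ∈ piAntidiag univ a, ∏ l, ((derivative^[j l] (p l)).eval z / ((j l).factorial : ℝ)) := by
  have h : (taylor z (∏ l, p l)).coeff a =
      ∑ j ∈ finsuppAntidiag univ a, ∏ l, (taylor z (p l)).coeff (j l) := by
    have h1 : taylor z (∏ l, p l) = ∏ l, taylor z (p l) := map_prod (taylorAlgHom z) p univ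
    rw [h1, ← Polynomial.coeff_coe, ← Polynomial.coeToPowerSeries.ringHom_apply, map_prod,
      PowerSeries.coeff_prod]
    simp
  have h2 : ∑ j ∈ finsuppAntidiag univ a, ∏ l, (taylor z (p l)).coeff (j l) =
      ∑ j ∈ piAntidiag univ a, ∏ l, (taylor z (p l)).coeff (j l) := by
    refine Finset.sum_nbij' (fun f => ⇑f) (fun f => Finsupp.equivFunOnFinite.symm f) ?_ ?_ ?_ ?_ ?_
    · intro f hf; simpa using hf
    · intro f hf; simpa using hf
    · intro f hf; simp
    · intro f hf; simp
    · intro f hf; rfl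
  rw [h2, taylor_coeff_eq] at h
  simp_rw [taylor_coeff_eq] at h
  have := Nat.factorial_ne_zero a
  rw [← h]
  field_simp

lemma eval_iter_prod_fac (m : ℕ) (n : Fin m → ℕ) (b y : Fin m → ℝ) (z : ℝ) (a : ℕ) :
    (derivative^[a] (∏ l, fac (n l) (b l) (y l))).eval z =
      ∑ j ∈ (Fintype.piFinset fun l : Fin m => Finset.range (n l + 1)).filter
        (fun j => ∑ l, j l = a),
      ((a.factorial : ℝ) / ∏ l, ((j l).factorial : ℝ)) *
        (∏ l, b l ^ j l) * ∏ l, (fac (n l - j l) (b l) (y l)).eval z := by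
  rw [eval_iter_prod, mul_sum]
  symm
  have hs : (Fintype.piFinset fun l : Fin m => Finset.range (n l + 1)).filter
        (fun j => ∑ l, j l = a) ⊆ piAntidiag univ a := by
    intro j hj
    simp only [mem_filter] at hj
    simp [hj.2]
  rw [← Finset.sum_subset hs]
  · refine sum_congr rfl fun j hj => ?_
    simp only [mem_filter, Fintype.mem_piFinset, mem_range] at hj
    rw [div_mul_eq_mul_div, div_mul_eq_mul_div, mul_assoc, mul_div_assoc, ← prod_mul_distrib,
      ← prod_div_distrib]
    congr 1
    refine prod_congr rfl fun l _ => ?_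
    rw [iter_fac_le _ _ _ _ (by have := hj.1 l; omega)]
    simp
  · intro j hj hj'
    have : ∃ l, n l < j l := by
      by_contra! hcon
      apply hj'
      simp only [mem_filter, Fintype.mem_piFinset, mem_range]
      refine ⟨fun l => by have := hcon l; omega, ?_⟩
      simpa using hj
    obtain ⟨l, hl⟩ := this
    rw [prod_eq_zero (mem_univ l), mul_zero]
    rw [iter_fac_gt _ _ _ _ hl]
    simp

lemma iter_prod_fac_zero (m : ℕ) (n : Fin m → ℕ) (b y : Fin m → ℝ) :
    derivative^[(∑ l, n l) + 1] (∏ l, fac (n l) (b l) (y l)) = 0 := by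
  apply Polynomial.funext
  intro z
  rw [eval_iter_prod_fac, eval_zero]
  apply sum_eq_zero
  intro j hj
  exfalso
  simp only [mem_filter, Fintype.mem_piFinset, mem_range] at hj
  have : ∑ l, j l ≤ ∑ l, n l := sum_le_sum fun l _ => by have := hj.1 l; omega
  omega

/-- repeated primitives of the last factor -/
noncomputable def Q (k : ℕ) (b y : ℝ) (a : ℕ) : ℝ[X] := C (b ^ (-(a : ℤ))) * fac (k + a) b y

lemma derivative_Q (k : ℕ) (b y : ℝ) (hb : b ≠ 0) (a : ℕ) :
    derivative (Q k b y (a + 1)) = Q k b y a := by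
  unfold Q
  rw [derivative_C_mul, ← add_assoc, derivative_fac_succ, ← mul_assoc, ← C_mul]
  congr 2
  rw [← zpow_add_one₀ hb]
  congr 1
  push_cast
  ring

/-- antiderivative -/
noncomputable def F (P : ℝ[X]) (N k : ℕ) (b y : ℝ) : ℝ[X] :=
  ∑ a ∈ range (N + 1), C ((-1 : ℝ) ^ a) * (derivative^[a] P * Q k b y (a + 1))

lemma derivative_F (P : ℝ[X]) (N k : ℕ) (b y : ℝ) (hb : b ≠ 0)
    (hP : derivative^[N + 1] P = 0) : derivative (F P N k b y) = P * fac k b y := by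
  unfold F
  rw [derivative_sum]
  have h : ∀ a ∈ range (N + 1),
      derivative (C ((-1 : ℝ) ^ a) * (derivative^[a] P * Q k b y (a + 1))) =
      C ((-1 : ℝ) ^ a) * (derivative^[a] P * Q k b y a) -
      C ((-1 : ℝ) ^ (a + 1)) * (derivative^[a + 1] P * Q k b y (a + 1)) := by
    intro a _
    rw [derivative_C_mul, derivative_mul, derivative_Q _ _ _ hb, Function.iterate_succ_apply',
      pow_succ, C_mul]
    simp
    ring
  rw [sum_congr rfl h,
    sum_range_sub' (fun a => C ((-1 : ℝ) ^ a) * (derivative^[a] P * Q k b y a)), hP]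
  simp [Q]

end IPB

open IPB in
/-- The integral of a product of `r = m+1` Bernoulli polynomials `B_{n_l}(b_l z + y_l)`
over `[0,x]` (Proposition 4.3). -/
theorem integral_prod_bernoulli (m : ℕ) (n : Fin (m + 1) → ℕ) (b y : Fin (m + 1) → ℝ)
    (hb : ∀ l, b l ≠ 0) (x : ℝ) :
    (1 / ∏ l, ((n l).factorial : ℝ)) *
        ∫ z in (0 : ℝ)..x, ∏ l, BPoly (n l) (b l * z + y l) =
      Tsum m n b y x := by
  set P : Polynomial ℝ := ∏ l : Fin m, fac (n l.castSucc) (b l.castSucc) (y l.castSucc) with hPdef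
  set N : ℕ := ∑ l : Fin m, n l.castSucc with hN
  have hP : Polynomial.derivative^[N + 1] P = 0 :=
    iter_prod_fac_zero m (fun l => n l.castSucc) (fun l => b l.castSucc) (fun l => y l.castSucc)
  set G := F P N (n (Fin.last m)) (b (Fin.last m)) (y (Fin.last m)) with hG
  have hd := derivative_F P N (n (Fin.last m)) (b (Fin.last m)) (y (Fin.last m)) (hb _) hP
  have hint : ∀ z : ℝ, (1 / ∏ l, ((n l).factorial : ℝ)) * ∏ l, BPoly (n l) (b l * z + y l) =
      (Polynomial.derivative G).eval z := by
    intro z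
    rw [hd, Polynomial.eval_mul, hPdef, Polynomial.eval_prod]
    simp_rw [eval_fac]
    rw [← Fin.prod_univ_castSucc
      (fun l => BPoly (n l) (b l * z + y l) / ((n l).factorial : ℝ)), prod_div_distrib]
    ring
  rw [← intervalIntegral.integral_const_mul]
  simp_rw [hint]
  rw [intervalIntegral.integral_eq_sub_of_hasDerivAt (fun z _ => G.hasDerivAt z)
    ((Polynomial.continuous _).intervalIntegrable _ _)]
  have hev : ∀ z : ℝ, G.eval z = ∑ a ∈ Finset.range (N + 1), (-1 : ℝ) ^ a *
    ∑ j ∈ (Fintype.piFinset fun l : Fin m => Finset.range (n l.castSucc + 1)).filter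
        (fun j => ∑ l, j l = a),
      ((a.factorial : ℝ) / ∏ l, ((j l).factorial : ℝ)) *
        (∏ l, b l.castSucc ^ j l) * b (Fin.last m) ^ (-(a : ℤ) - 1) *
        ((∏ l : Fin m, (fac (n l.castSucc - j l) (b l.castSucc) (y l.castSucc)).eval z) *
        (fac (n (Fin.last m) + a + 1) (b (Fin.last m)) (y (Fin.last m))).eval z) := by
    intro z
    rw [hG, F, Polynomial.eval_finsetSum]
    refine sum_congr rfl fun a _ => ?_
    rw [Polynomial.eval_mul, Polynomial.eval_C, Polynomial.eval_mul, hPdef,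
      eval_iter_prod_fac m (fun l => n l.castSucc) (fun l => b l.castSucc) (fun l => y l.castSucc),
      sum_mul]
    congr 1
    refine sum_congr rfl fun j _ => ?_
    rw [Q, Polynomial.eval_mul, Polynomial.eval_C, ← add_assoc]
    rw [show (-((a + 1 : ℕ) : ℤ)) = -(a : ℤ) - 1 by push_cast; ring]
    ring
  rw [hev, hev, Tsum, ← sum_sub_distrib]
  refine sum_congr rfl fun a _ => ?_
  rw [← mul_sub, ← sum_sub_distrib]
  congr 1
  refine sum_congr rfl fun j _ => ?_
  rw [← mul_sub]
  congr 1
  simp only [Chat, Fin.prod_univ_castSucc, Fin.snoc_castSucc, Fin.snoc_last, eval_fac,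
    prod_div_distrib, mul_zero, zero_add]
  rw [div_mul_div_comm, div_mul_div_comm]
  ring
end

section
/- Let r ≥ 1, let n₁, …, n_r ≥ 0 be integers, b₁, …, b_r nonzero real numbers, y₁, …, y_r and x real numbers, and define T_{n₁,…,n_r}(x; b₁,…,b_r; y₁,…,y_r) = Σ_{a=0}^{n₁+⋯+n_{r−1}} (−1)^a · Σ_{j₁+⋯+j_{r−1}=a, 0≤j_l≤n_l} ( a!/(j₁!⋯j_{r−1}!) ) · b₁^{j₁}⋯b_{r−1}^{j_{r−1}} · b_r^{−a−1} · Ĉ_{n₁−j₁,…,n_{r−1}−j_{r−1}, n_r+a+1}, where Ĉ_{m₁,…,m_r} = (1/(m₁!⋯m_r!))·( ∏_{l=1}^r B_{m_l}(b_l x + y_l) − ∏_{l=1}^r B_{m_l}(y_l) ). Then for every permutation σ of {1,…,r}, T_{n₁,…,n_r}(x; b₁,…,b_r; y₁,…,y_r) = T_{n_{σ(1)},…,n_{σ(r)}}(x; b_{σ(1)},…,b_{σ(r)}; y_{σ(1)},…,y_{σ(r)}). -/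
open Finset

/-- normalized Bernoulli polynomial -/
noncomputable def nB (k : ℕ) (x : ℝ) : ℝ := BPoly k x / k.factorial

lemma nB_zero_deriv (b y x : ℝ) : HasDerivAt (fun x => nB 0 (b * x + y)) 0 x := by
  simp [nB, BPoly, hasDerivAt_const]

lemma nB_succ_deriv (k : ℕ) (b y x : ℝ) :
    HasDerivAt (fun x => nB (k + 1) (b * x + y)) (b * nB k (b * x + y)) x := by
  have h1 := ((Polynomial.bernoulli (k + 1)).map (algebraMap ℚ ℝ)).hasDerivAt (b * x + y)
  have h2 : HasDerivAt (fun x : ℝ => b * x + y) b x := by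
    simpa using ((hasDerivAt_id x).const_mul b).add_const y
  have h3 := (h1.comp x h2).div_const ((k + 1).factorial : ℝ)
  have h4 : HasDerivAt (fun x => nB (k + 1) (b * x + y)) _ x := h3
  convert h4 using 1
  rw [Polynomial.derivative_map, Polynomial.derivative_bernoulli_add_one]
  have : (k.factorial : ℝ) ≠ 0 := by positivity
  simp only [nB, BPoly, Polynomial.map_mul, Polynomial.eval_mul, Nat.factorial_succ]
  simp
  field_simp

/-- coefficient -/
noncomputable def cf (m : ℕ) (b : Fin (m + 1) → ℝ) (j : Fin m → ℕ) : ℝ :=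
  (-1 : ℝ) ^ (∑ l, j l) * ((((∑ l, j l).factorial : ℝ) / ∏ l, ((j l).factorial : ℝ)) *
    (∏ l, b l.castSucc ^ j l) * b (Fin.last m) ^ (-((∑ l, j l : ℕ) : ℤ) - 1))

/-- product of the first factors -/
noncomputable def PB (m : ℕ) (n : Fin (m + 1) → ℕ) (b y : Fin (m + 1) → ℝ) (x : ℝ)
    (j : Fin m → ℕ) : ℝ :=
  ∏ l : Fin m, nB (n l.castSucc - j l) (b l.castSucc * x + y l.castSucc)

/-- last factor -/
noncomputable def LB (m : ℕ) (n : Fin (m + 1) → ℕ) (b y : Fin (m + 1) → ℝ) (x : ℝ)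
    (a : ℕ) : ℝ :=
  nB (n (Fin.last m) + a) (b (Fin.last m) * x + y (Fin.last m))

/-- index idxBox -/
def idxBox (m : ℕ) (n : Fin (m + 1) → ℕ) : Finset (Fin m → ℕ) :=
  Fintype.piFinset fun l : Fin m => Finset.range (n l.castSucc + 1)

lemma mem_box {m : ℕ} {n : Fin (m + 1) → ℕ} {j : Fin m → ℕ} :
    j ∈ idxBox m n ↔ ∀ l, j l ≤ n l.castSucc := by
  simp [idxBox, Nat.lt_succ_iff]

/-- primitive -/
noncomputable def GG (m : ℕ) (n : Fin (m + 1) → ℕ) (b y : Fin (m + 1) → ℝ) (x : ℝ) : ℝ :=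
  ∑ j ∈ idxBox m n, cf m b j * (PB m n b y x j * LB m n b y x (∑ l, j l + 1))

lemma Tsum_eq (m : ℕ) (n : Fin (m + 1) → ℕ) (b y : Fin (m + 1) → ℝ) (x : ℝ) :
    Tsum m n b y x = GG m n b y x - GG m n b y 0 := by
  have hmaps : ∀ j ∈ idxBox m n, ∑ l, j l ∈ Finset.range ((∑ l : Fin m, n l.castSucc) + 1) := by
    intro j hj
    rw [Finset.mem_range, Nat.lt_succ_iff]
    exact Finset.sum_le_sum fun l _ => mem_box.1 hj l
  unfold GG
  rw [← Finset.sum_sub_distrib, ← Finset.sum_fiberwise_of_maps_to hmaps]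
  unfold Tsum
  refine Finset.sum_congr rfl fun a _ => ?_
  rw [Finset.mul_sum]
  refine Finset.sum_congr rfl fun j hj => ?_
  obtain ⟨hj, rfl⟩ := Finset.mem_filter.1 hj
  rw [← mul_sub, cf, mul_assoc ((-1 : ℝ) ^ _)]
  congr 2
  simp only [Chat, PB, LB, nB, Fin.prod_univ_castSucc, Fin.snoc_castSucc, Fin.snoc_last,
    Finset.prod_div_distrib, mul_zero, zero_add, add_assoc]
  simp only [mul_comm _ x]
  have h1 : ∏ l : Fin m, ((n l.castSucc - j l).factorial : ℝ) ≠ 0 :=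
    Finset.prod_ne_zero_iff.2 fun l _ => by positivity
  field_simp
  try ring

lemma cf_succ (m : ℕ) (b : Fin (m + 1) → ℝ) (hb : b (Fin.last m) ≠ 0) (j : Fin m → ℕ)
    (k : Fin m) :
    cf m b j * b k.castSucc = -(b (Fin.last m) * cf m b (j + Pi.single k 1)) *
      (((j + Pi.single k 1 : Fin m → ℕ) k : ℝ) /
        ((∑ l, (j + Pi.single k 1 : Fin m → ℕ) l : ℕ) : ℝ)) := by
  have hs : ∑ l, (j + Pi.single k 1 : Fin m → ℕ) l = ∑ l, j l + 1 := by
    simp [Finset.sum_add_distrib]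
  have hp : ∏ l, b l.castSucc ^ (j + Pi.single k 1 : Fin m → ℕ) l
      = (∏ l, b l.castSucc ^ j l) * b k.castSucc := by
    simp only [Pi.add_apply, pow_add, Finset.prod_mul_distrib]
    congr 1
    rw [Finset.prod_eq_single k] <;> simp +contextual [Pi.single_apply]
  have hf : ∏ l, (((j + Pi.single k 1 : Fin m → ℕ) l).factorial : ℝ)
      = (∏ l, ((j l).factorial : ℝ)) * (j k + 1) := by
    rw [← Finset.mul_prod_erase _ _ (Finset.mem_univ k),
      ← Finset.mul_prod_erase _ (fun l => ((j l).factorial : ℝ)) (Finset.mem_univ k)]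
    have : ∏ l ∈ univ.erase k, (((j + Pi.single k 1 : Fin m → ℕ) l).factorial : ℝ)
        = ∏ l ∈ univ.erase k, ((j l).factorial : ℝ) := by
      refine Finset.prod_congr rfl fun l hl => ?_
      simp [Pi.single_apply, Finset.ne_of_mem_erase hl]
    rw [this]
    simp [Nat.factorial_succ]
    ring
  unfold cf
  rw [hs, hp, hf]
  have h1 : ∏ l : Fin m, ((j l).factorial : ℝ) ≠ 0 :=
    Finset.prod_ne_zero_iff.2 fun l _ => by positivity
  have h2 : (-((∑ l, j l + 1 : ℕ) : ℤ) - 1) = (-((∑ l, j l : ℕ) : ℤ) - 1) - 1 := by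
    push_cast; ring
  rw [h2, zpow_sub_one₀ hb (-((∑ l, j l : ℕ) : ℤ) - 1), pow_succ, Nat.factorial_succ]
  have h3 : (j k : ℝ) + 1 ≠ 0 := by positivity
  have h4 : ((∑ l, j l : ℕ) : ℝ) + 1 ≠ 0 := by positivity
  simp only [Pi.add_apply, Pi.single_eq_same]
  generalize b (Fin.last m) ^ (-((∑ l, j l : ℕ) : ℤ) - 1) = z
  generalize (∑ l, j l) = s at *
  generalize b (Fin.last m) = c at *
  push_cast
  field_simp

/-- partial derivative factor -/
noncomputable def dP (m : ℕ) (n : Fin (m + 1) → ℕ) (b y : Fin (m + 1) → ℝ) (x : ℝ)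
    (j : Fin m → ℕ) (k : Fin m) : ℝ :=
  if j k < n k.castSucc then b k.castSucc * PB m n b y x (j + Pi.single k 1) else 0

lemma PB_deriv (m : ℕ) (n : Fin (m + 1) → ℕ) (b y : Fin (m + 1) → ℝ) (x : ℝ)
    (j : Fin m → ℕ) :
    HasDerivAt (fun x => PB m n b y x j) (∑ k, dP m n b y x j k) x := by
  have h : ∀ l ∈ (univ : Finset (Fin m)),
      HasDerivAt (fun x => nB (n l.castSucc - j l) (b l.castSucc * x + y l.castSucc))
      (if j l < n l.castSucc then b l.castSucc *
        nB (n l.castSucc - (j l + 1)) (b l.castSucc * x + y l.castSucc) else 0) x := by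
    intro l _
    split_ifs with hl
    · obtain ⟨k, hk⟩ : ∃ k, n l.castSucc - j l = k + 1 := ⟨n l.castSucc - j l - 1, by omega⟩
      rw [hk, show n l.castSucc - (j l + 1) = k by omega]
      exact nB_succ_deriv _ _ _ _
    · rw [show n l.castSucc - j l = 0 by omega]
      exact nB_zero_deriv _ _ _
  have h2 := HasDerivAt.fun_finsetProd h
  unfold PB
  refine h2.congr_deriv ?_
  refine Finset.sum_congr rfl fun k _ => Eq.symm ?_
  unfold dP
  split_ifs with hk
  · unfold PB
    rw [← Finset.mul_prod_erase _ _ (Finset.mem_univ k)]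
    have : ∏ l ∈ univ.erase k, nB (n l.castSucc - (j + Pi.single k 1 : Fin m → ℕ) l)
          (b l.castSucc * x + y l.castSucc)
        = ∏ l ∈ univ.erase k, nB (n l.castSucc - j l) (b l.castSucc * x + y l.castSucc) := by
      refine Finset.prod_congr rfl fun l hl => ?_
      simp [Pi.single_apply, Finset.ne_of_mem_erase hl]
    rw [this]
    simp
    ring
  · simp

lemma shift_sum (m : ℕ) (n : Fin (m + 1) → ℕ) (b y : Fin (m + 1) → ℝ)
    (hb : b (Fin.last m) ≠ 0) (x : ℝ) (k : Fin m) :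
    ∑ j ∈ idxBox m n, cf m b j * (dP m n b y x j k * LB m n b y x (∑ l, j l + 1)) =
    ∑ j ∈ idxBox m n, -(b (Fin.last m) * cf m b j) * ((j k : ℝ) / ((∑ l, j l : ℕ) : ℝ)) *
      (PB m n b y x j * LB m n b y x (∑ l, j l)) := by
  rw [← Finset.sum_filter_of_ne (s := idxBox m n) (p := fun j => j k < n k.castSucc),
    ← Finset.sum_filter_of_ne (s := idxBox m n) (p := fun j => 0 < j k)]
  · refine Finset.sum_bij' (fun j _ => j + Pi.single k 1) (fun j _ => j - Pi.single k 1)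
      ?_ ?_ ?_ ?_ ?_
    · intro j hj
      simp only [Finset.mem_filter, mem_box] at hj ⊢
      refine ⟨fun l => ?_, by simp⟩
      by_cases h : l = k
      · subst h; simpa using hj.2
      · simpa [Pi.single_apply, h] using hj.1 l
    · intro j hj
      simp only [Finset.mem_filter, mem_box] at hj ⊢
      refine ⟨fun l => ?_, ?_⟩
      · have := hj.1 l
        simp only [Pi.sub_apply]
        omega
      · have := hj.1 k
        simp only [Pi.sub_apply, Pi.single_eq_same]
        omega
    · intro j hj
      simp
    · intro j hj
      simp only [Finset.mem_filter, mem_box] at hj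
      funext l
      by_cases h : l = k
      · subst h; simp; omega
      · simp [Pi.single_apply, h]
    · intro j hj
      simp only [Finset.mem_filter, mem_box] at hj
      rw [← cf_succ m b hb]
      have hs : ∑ l, (j + Pi.single k 1 : Fin m → ℕ) l = ∑ l, j l + 1 := by
        simp [Finset.sum_add_distrib]
      rw [hs, dP, if_pos hj.2]
      ring
  · intro j _ h
    by_contra h0
    apply h
    simp [show j k = 0 by omega]
  · intro j _ h
    by_contra h0
    apply h
    simp [dP, h0]

lemma GG_deriv (m : ℕ) (n : Fin (m + 1) → ℕ) (b y : Fin (m + 1) → ℝ)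
    (hb : b (Fin.last m) ≠ 0) (x : ℝ) :
    HasDerivAt (GG m n b y) (∏ l, nB (n l) (b l * x + y l)) x := by
  have h : HasDerivAt (GG m n b y) (∑ j ∈ idxBox m n, cf m b j *
      ((∑ k, dP m n b y x j k) * LB m n b y x (∑ l, j l + 1) +
        PB m n b y x j * (b (Fin.last m) * LB m n b y x (∑ l, j l)))) x := by
    unfold GG
    refine HasDerivAt.fun_sum fun j _ => HasDerivAt.const_mul _ ?_
    exact (PB_deriv m n b y x j).fun_mul (nB_succ_deriv _ _ _ _)
  convert h using 1
  simp only [mul_add, Finset.sum_add_distrib, Finset.sum_mul]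
  simp only [Finset.mul_sum]
  rw [Finset.sum_comm]
  simp only [shift_sum m n b y hb x]
  rw [Finset.sum_comm, ← Finset.sum_add_distrib]
  rw [Finset.sum_eq_single (0 : Fin m → ℕ)]
  · simp [cf, PB, LB, Fin.prod_univ_castSucc]
    rw [mul_left_comm, inv_mul_cancel_left₀ hb]
  · intro j _ hj
    rw [← Finset.sum_mul, ← Finset.mul_sum, ← Finset.sum_div, ← Nat.cast_sum, div_self]
    · ring
    · intro h0
      apply hj
      funext l
      have := Finset.sum_eq_zero_iff.1 (Nat.cast_eq_zero.1 h0) l (Finset.mem_univ l)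
      simpa using this
  · intro h0
    exact absurd (mem_box.2 fun l => by simp) h0

/-- The right-hand side of the product-integral formula is invariant under permutations
of the data (Corollary 4.4). -/
theorem Tsum_perm_invariant (m : ℕ) (n : Fin (m + 1) → ℕ) (b y : Fin (m + 1) → ℝ)
    (hb : ∀ l, b l ≠ 0) (x : ℝ) (σ : Equiv.Perm (Fin (m + 1))) :
    Tsum m n b y x = Tsum m (n ∘ σ) (b ∘ σ) (y ∘ σ) x := by
  rw [Tsum_eq, Tsum_eq]
  have h : ∀ t, HasDerivAt (fun t => GG m n b y t - GG m (n ∘ σ) (b ∘ σ) (y ∘ σ) t) 0 t := by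
    intro t
    have h1 := GG_deriv m n b y (hb _) t
    have h2 := GG_deriv m (n ∘ σ) (b ∘ σ) (y ∘ σ) (hb _) t
    have h3 := h1.fun_sub h2
    refine h3.congr_deriv ?_
    rw [sub_eq_zero]
    exact (Equiv.prod_comp σ (fun l => nB (n l) (b l * t + y l))).symm
  have h5 := is_const_of_deriv_eq_zero (fun t => (h t).differentiableAt)
    (fun t => (h t).deriv) x 0
  linarith
end

section
/- Let n, m ≥ 0 be integers, let b₁, b₂ be nonzero real numbers, and let x, y₁, y₂ be real numbers. Then Σ_{a=0}^{n} (−1)^a·C(m+n+1, n−a)·b₁^a·b₂^{−a−1}·B_{n−a}(b₁x+y₁)·B_{m+a+1}(b₂x+y₂) − Σ_{a=0}^{m} (−1)^a·C(m+n+1, m−a)·b₂^a·b₁^{−a−1}·B_{m−a}(b₂x+y₂)·B_{n+a+1}(b₁x+y₁) = ((−1)^{m+1}/(b₁^{m+1}·b₂^{n+1})) · Σ_{a=0}^{m+n+1} (−1)^a·C(m+n+1, a)·b₁^a·b₂^{m+n+1−a}·B_{m+n+1−a}(y₁)·B_a(y₂). -/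
open Finset

theorem BPoly_hasDerivAt (k : ℕ) (x : ℝ) :
    HasDerivAt (BPoly k) ((k : ℝ) * BPoly (k - 1) x) x := by
  have h := ((Polynomial.bernoulli k).map (algebraMap ℚ ℝ)).hasDerivAt x
  rw [Polynomial.derivative_map, Polynomial.derivative_bernoulli] at h
  have hB : BPoly k = fun x => Polynomial.eval x ((Polynomial.bernoulli k).map (algebraMap ℚ ℝ)) := rfl
  rw [hB]
  simpa [BPoly, Polynomial.map_mul] using h

theorem BPoly_lin_hasDerivAt (k : ℕ) (b y x : ℝ) :
    HasDerivAt (fun x => BPoly k (b * x + y)) (b * ((k : ℝ) * BPoly (k - 1) (b * x + y))) x := by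
  have h1 : HasDerivAt (fun x : ℝ => b * x + y) b x := by
    simpa using ((hasDerivAt_id x).const_mul b).add_const y
  have h := (BPoly_hasDerivAt k (b * x + y)).comp x h1
  rw [mul_comm b]
  exact h

theorem recip_sum_const (N : ℕ) (b₁ b₂ x y₁ y₂ : ℝ) :
    ∑ a ∈ Finset.range (N + 1), (-1 : ℝ) ^ a * (Nat.choose N a : ℝ) *
          b₁ ^ a * b₂ ^ (N - a) * BPoly (N - a) (b₁ * x + y₁) * BPoly a (b₂ * x + y₂) =
    ∑ a ∈ Finset.range (N + 1), (-1 : ℝ) ^ a * (Nat.choose N a : ℝ) *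
          b₁ ^ a * b₂ ^ (N - a) * BPoly (N - a) y₁ * BPoly a y₂ := by
  have key : ∀ x : ℝ, HasDerivAt (fun x => ∑ a ∈ Finset.range (N + 1),
      (-1 : ℝ) ^ a * (Nat.choose N a : ℝ) *
      b₁ ^ a * b₂ ^ (N - a) * BPoly (N - a) (b₁ * x + y₁) * BPoly a (b₂ * x + y₂)) 0 x := by
    intro x
    let G : ℕ → ℝ := fun a => (-1 : ℝ) ^ a * ((Nat.choose N a : ℝ) * a) * b₁ ^ a *
      (b₂ ^ (N - a) * b₂) * BPoly (N - a) (b₁ * x + y₁) * BPoly (a - 1) (b₂ * x + y₂)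
    have hG : ∑ a ∈ Finset.range (N + 1), (G a - G (a + 1)) = 0 := by
      rw [Finset.sum_range_sub']
      simp [G]
    rw [← hG]
    refine HasDerivAt.fun_sum fun a ha => ?_
    have h := (((BPoly_lin_hasDerivAt (N - a) b₁ y₁ x).const_mul
      ((-1 : ℝ) ^ a * (Nat.choose N a : ℝ) * b₁ ^ a * b₂ ^ (N - a))).fun_mul
      (BPoly_lin_hasDerivAt a b₂ y₂ x))
    refine h.congr_deriv ?_
    have ha' : a ≤ N := by simpa [Nat.lt_succ_iff] using ha
    simp only [G]
    have hc : (Nat.choose N (a + 1) : ℝ) * ((a + 1 : ℕ) : ℝ) = Nat.choose N a * ((N - a : ℕ) : ℝ) := by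
      exact_mod_cast Nat.choose_succ_right_eq N a
    rw [hc]
    rcases ha'.eq_or_lt with rfl | hlt
    · simp
      ring
    · obtain ⟨d, rfl⟩ := Nat.exists_eq_add_of_lt hlt
      have e1 : a + d + 1 - a = d + 1 := by omega
      have e2 : a + d + 1 - (a + 1) = d := by omega
      simp only [e1, e2, Nat.add_sub_cancel]
      ring
  have := is_const_of_deriv_eq_zero (fun x => (key x).differentiableAt)
    (fun x => (key x).deriv) x 0
  simpa using this

/-- Reciprocity relation for Bernoulli polynomials (Corollary 1.4). -/
theorem bernoulli_reciprocity (n m : ℕ) (b₁ b₂ : ℝ) (hb₁ : b₁ ≠ 0) (hb₂ : b₂ ≠ 0)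
    (x y₁ y₂ : ℝ) :
    (∑ a ∈ Finset.range (n + 1), (-1 : ℝ) ^ a * (Nat.choose (m + n + 1) (n - a) : ℝ) *
        b₁ ^ a * b₂ ^ (-(a : ℤ) - 1) * BPoly (n - a) (b₁ * x + y₁) * BPoly (m + a + 1) (b₂ * x + y₂))
      - (∑ a ∈ Finset.range (m + 1), (-1 : ℝ) ^ a * (Nat.choose (m + n + 1) (m - a) : ℝ) *
        b₂ ^ a * b₁ ^ (-(a : ℤ) - 1) * BPoly (m - a) (b₂ * x + y₂) * BPoly (n + a + 1) (b₁ * x + y₁)) =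
      ((-1 : ℝ) ^ (m + 1) / (b₁ ^ (m + 1) * b₂ ^ (n + 1))) *
        ∑ a ∈ Finset.range (m + n + 2), (-1 : ℝ) ^ a * (Nat.choose (m + n + 1) a : ℝ) *
          b₁ ^ a * b₂ ^ (m + n + 1 - a) * BPoly (m + n + 1 - a) y₁ * BPoly a y₂ := by
  have hc := recip_sum_const (m + n + 1) b₁ b₂ x y₁ y₂
  rw [show m + n + 1 + 1 = m + n + 2 from rfl] at hc
  rw [← hc, show m + n + 2 = (m + 1) + (n + 1) by ring, Finset.sum_range_add _ (m + 1) (n + 1),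
    mul_add, sub_eq_add_neg, add_comm (_ / _ * _)]
  generalize b₁ * x + y₁ = u
  generalize b₂ * x + y₂ = v
  have neg1 : ∀ (k : ℕ), (-1 : ℝ) ^ k * (-1) ^ k = 1 := fun k => by
    rw [← mul_pow]; simp
  congr 1
  · rw [Finset.mul_sum]
    refine Finset.sum_congr rfl fun a ha => ?_
    obtain ⟨d, rfl⟩ := Nat.exists_eq_add_of_le (Nat.lt_succ_iff.mp (Finset.mem_range.mp ha))
    have e1 : m + (a + d) + 1 - (m + 1 + a) = d := by omega
    have e2 : a + d - a = d := by omega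
    have e3 : (m + (a + d) + 1).choose (m + 1 + a) = (m + (a + d) + 1).choose d := by
      rw [← Nat.choose_symm_of_eq_add]; omega
    have e4 : b₂ ^ (-(a : ℤ) - 1) = (b₂ ^ (a + 1))⁻¹ := by
      rw [← zpow_natCast, ← zpow_neg]; congr 1; push_cast; ring
    have e5 : m + 1 + a = m + a + 1 := by ring
    rw [e1, e2, e3, e4, e5]
    have h : (-1 : ℝ) ^ (m + 1) * (-1) ^ (m + a + 1) = (-1) ^ a := by
      rw [show m + a + 1 = (m + 1) + a by ring, pow_add _ (m + 1), ← mul_assoc, neg1, one_mul]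
    rw [← h]
    field_simp
    ring
  · rw [Finset.mul_sum, ← Finset.sum_neg_distrib, ← Finset.sum_range_reflect]
    refine Finset.sum_congr rfl fun a ha => ?_
    obtain ⟨d, rfl⟩ := Nat.exists_eq_add_of_le (Nat.lt_succ_iff.mp (Finset.mem_range.mp ha))
    have e0 : a + d + 1 - 1 - a = d := by omega
    have e1 : a + d + n + 1 - a = n + d + 1 := by omega
    have e2 : a + d - d = a := by omega
    have e4 : b₁ ^ (-(d : ℤ) - 1) = (b₁ ^ (d + 1))⁻¹ := by
      rw [← zpow_natCast, ← zpow_neg]; congr 1; push_cast; ring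
    rw [e0, e1, e2, e4]
    have h : (-1 : ℝ) ^ (a + d + 1) * (-1) ^ a = - (-1) ^ d := by
      rw [show a + d + 1 = a + (d + 1) by ring, pow_add _ a, mul_right_comm, neg1]; ring
    have h2 : (-1 : ℝ) ^ d = -((-1 : ℝ) ^ (a + d + 1) * (-1) ^ a) := by rw [h]; ring
    rw [h2]
    field_simp
    ring
end

section
/- Let n, m ≥ 0 be integers and let x, y₁, y₂ be real numbers. Then Σ_{a=0}^{n} (−1)^a·C(m+n+1, n−a)·B_{n−a}(x+y₁)·B_{m+a+1}(x+y₂) − Σ_{a=0}^{m} (−1)^a·C(m+n+1, m−a)·B_{m−a}(x+y₂)·B_{n+a+1}(x+y₁) = (−1)^m·(m+n+1)·(y₂−y₁)·B_{m+n}(y₁−y₂) + (−1)^m·(m+n)·B_{m+n+1}(y₁−y₂). -/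
open Finset

/-- Exponential generating function of the Bernoulli polynomials. -/
noncomputable def BGen (t : ℝ) : PowerSeries ℝ :=
  PowerSeries.mk fun n => BPoly n t / (n.factorial : ℝ)

theorem BGen_mul (t : ℝ) :
    BGen t * (PowerSeries.exp ℝ - 1) = PowerSeries.X * PowerSeries.rescale t (PowerSeries.exp ℝ) := by
  rw [← Polynomial.bernoulli_generating_function (A := ℝ) t]
  congr 1
  unfold BGen
  congr 1
  funext n
  rw [map_smul, BPoly, Polynomial.eval_map_algebraMap]
  rw [Algebra.smul_def]
  simp
  ring

theorem exp_sub_one_ne : (PowerSeries.exp ℝ - 1 : PowerSeries ℝ) ≠ 0 := by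
  intro h
  have := congrArg (PowerSeries.coeff 1) h
  simp [PowerSeries.coeff_exp, PowerSeries.coeff_one] at this

theorem deriv_rescale_exp (c : ℝ) :
    PowerSeries.derivative ℝ (PowerSeries.rescale c (PowerSeries.exp ℝ)) =
      PowerSeries.C c * PowerSeries.rescale c (PowerSeries.exp ℝ) := by
  ext n
  rw [PowerSeries.coeff_derivative, PowerSeries.coeff_C_mul]
  simp only [PowerSeries.coeff_rescale, PowerSeries.coeff_exp, Nat.factorial_succ]
  have : (n.factorial : ℝ) ≠ 0 := by positivity
  have : (n : ℝ) + 1 ≠ 0 := by positivity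
  simp
  field_simp
  ring

theorem BGen_conv (a b : ℝ) :
    BGen a * BGen b = BGen (a + b) - PowerSeries.X * PowerSeries.derivative ℝ (BGen (a + b))
      + PowerSeries.C (a + b - 1) * (PowerSeries.X * BGen (a + b)) := by
  have ha := BGen_mul a
  have hb := BGen_mul b
  have hc := BGen_mul (a + b)
  have he := PowerSeries.exp_mul_exp_eq_exp_add (A := ℝ) a b
  have hd := congrArg (PowerSeries.derivative ℝ) hc
  rw [Derivation.leibniz, Derivation.leibniz, deriv_rescale_exp] at hd
  have h1 : PowerSeries.derivative ℝ (PowerSeries.exp ℝ - 1) = PowerSeries.exp ℝ := by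
    have := deriv_rescale_exp 1
    rw [map_sub]
    simpa using this
  have h2 : PowerSeries.derivative ℝ (PowerSeries.X : PowerSeries ℝ) = 1 :=
    PowerSeries.derivative_X
  rw [h1, h2] at hd
  simp only [smul_eq_mul] at hd
  have h3 : (PowerSeries.C (a + b - 1) : PowerSeries ℝ) = PowerSeries.C (a + b) - 1 := by simp
  rw [h3]
  have hne := exp_sub_one_ne
  refine mul_right_cancel₀ (mul_ne_zero hne hne) ?_
  generalize PowerSeries.derivative ℝ (BGen (a + b)) = G' at *
  generalize BGen (a + b) = G at *
  generalize PowerSeries.rescale (a + b) (PowerSeries.exp ℝ) = ec at *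
  generalize PowerSeries.rescale a (PowerSeries.exp ℝ) = ea at *
  generalize PowerSeries.rescale b (PowerSeries.exp ℝ) = eb at *
  generalize PowerSeries.exp ℝ = E at *
  generalize PowerSeries.C (a + b) = c at *
  generalize (PowerSeries.X : PowerSeries ℝ) = X at *
  linear_combination (BGen b * (E - 1)) * ha + X * ea * hb + X ^ 2 * he
    + X * (E - 1) * hd - (1 + c * X) * (E - 1) * hc - X * hc

theorem BPoly_conv (N : ℕ) (a b : ℝ) :
    ∑ k ∈ Finset.range (N + 2), ((N + 1).choose k : ℝ) * BPoly k a * BPoly (N + 1 - k) b =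
      (N + 1) * (a + b - 1) * BPoly N (a + b) - N * BPoly (N + 1) (a + b) := by
  have h := congrArg (PowerSeries.coeff (N + 1)) (BGen_conv a b)
  rw [PowerSeries.coeff_mul, Finset.Nat.sum_antidiagonal_eq_sum_range_succ_mk, map_add, map_sub,
    PowerSeries.coeff_C_mul, PowerSeries.coeff_succ_X_mul, PowerSeries.coeff_succ_X_mul,
    PowerSeries.coeff_derivative] at h
  simp only [BGen, PowerSeries.coeff_mk] at h
  have hf : ((N + 1).factorial : ℝ) ≠ 0 := by positivity
  have hs : ∑ k ∈ Finset.range (N + 2), ((N + 1).choose k : ℝ) * BPoly k a * BPoly (N + 1 - k) b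
      = ((N + 1).factorial : ℝ) * ∑ k ∈ Finset.range (N + 1).succ,
        BPoly k a / (k.factorial : ℝ) * (BPoly (N + 1 - k) b / ((N + 1 - k).factorial : ℝ)) := by
    rw [Finset.mul_sum]
    refine Finset.sum_congr rfl fun k hk => ?_
    rw [Nat.cast_choose ℝ (by simp at hk; omega)]
    have : (k.factorial : ℝ) ≠ 0 := by positivity
    have : ((N + 1 - k).factorial : ℝ) ≠ 0 := by positivity
    field_simp
  rw [hs, h, Nat.factorial_succ]
  have : (N.factorial : ℝ) ≠ 0 := by positivity
  have : (N : ℝ) + 1 ≠ 0 := by positivity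
  push_cast
  field_simp
  ring

theorem BPoly_one_sub (k : ℕ) (u : ℝ) : BPoly k (1 - u) = (-1) ^ k * BPoly k u := by
  have h := congrArg (Polynomial.aeval u) (Polynomial.bernoulli_comp_one_sub_X k)
  rw [Polynomial.aeval_comp] at h
  simpa [BPoly, Polynomial.eval_map_algebraMap] using h

theorem bernoulli_reciprocity_shift (n m : ℕ) (x y₁ y₂ : ℝ) :
    (∑ a ∈ Finset.range (n + 1), (-1 : ℝ) ^ a * (Nat.choose (m + n + 1) (n - a) : ℝ) *
        BPoly (n - a) (x + y₁) * BPoly (m + a + 1) (x + y₂))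
      - (∑ a ∈ Finset.range (m + 1), (-1 : ℝ) ^ a * (Nat.choose (m + n + 1) (m - a) : ℝ) *
        BPoly (m - a) (x + y₂) * BPoly (n + a + 1) (x + y₁)) =
      (-1 : ℝ) ^ m * ((m : ℝ) + n + 1) * (y₂ - y₁) * BPoly (m + n) (y₁ - y₂)
        + (-1 : ℝ) ^ m * ((m : ℝ) + n) * BPoly (m + n + 1) (y₁ - y₂) := by
  have h := BPoly_conv (m + n) (1 - (x + y₁)) (x + y₂)
  have e : 1 - (x + y₁) + (x + y₂) = 1 - (y₁ - y₂) := by ring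
  rw [e] at h
  simp only [BPoly_one_sub] at h
  rw [show m + n + 2 = (n + 1) + (m + 1) by ring, Finset.sum_range_add] at h
  have hn : ((-1 : ℝ) ^ n) * (-1) ^ n = 1 := by rw [← mul_pow]; simp
  have s1 : ∑ a ∈ Finset.range (n + 1), (-1 : ℝ) ^ a * (Nat.choose (m + n + 1) (n - a) : ℝ) *
        BPoly (n - a) (x + y₁) * BPoly (m + a + 1) (x + y₂) =
      (-1) ^ n * ∑ k ∈ Finset.range (n + 1), ((m + n + 1).choose k : ℝ) *
        ((-1) ^ k * BPoly k (x + y₁)) * BPoly (m + n + 1 - k) (x + y₂) := by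
    rw [← Finset.sum_range_reflect, Finset.mul_sum]
    refine Finset.sum_congr rfl fun k hk => ?_
    obtain ⟨d, rfl⟩ : ∃ d, n = k + d := Nat.exists_eq_add_of_le (by simp at hk; omega)
    rw [show k + d + 1 - 1 - k = d by omega, show k + d - d = k by omega,
      show m + (k + d) + 1 - k = m + d + 1 by omega, pow_add]
    have hk : ((-1 : ℝ) ^ k) * (-1) ^ k = 1 := by rw [← mul_pow]; simp
    linear_combination (-((-1 : ℝ) ^ d * ((m + (k + d) + 1).choose k : ℝ) *
      BPoly k (x + y₁) * BPoly (m + d + 1) (x + y₂))) * hk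
  have s2 : ∑ a ∈ Finset.range (m + 1), (-1 : ℝ) ^ a * (Nat.choose (m + n + 1) (m - a) : ℝ) *
        BPoly (m - a) (x + y₂) * BPoly (n + a + 1) (x + y₁) =
      - ((-1) ^ n * ∑ k ∈ Finset.range (m + 1), ((m + n + 1).choose (n + 1 + k) : ℝ) *
        ((-1) ^ (n + 1 + k) * BPoly (n + 1 + k) (x + y₁)) *
          BPoly (m + n + 1 - (n + 1 + k)) (x + y₂)) := by
    rw [Finset.mul_sum, ← Finset.sum_neg_distrib]
    refine Finset.sum_congr rfl fun k hk => ?_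
    have hk' : k ≤ m := by simp at hk; omega
    rw [show m + n + 1 - (n + 1 + k) = m - k by omega, show n + k + 1 = n + 1 + k by ring,
      Nat.choose_symm_of_eq_add (show m + n + 1 = (m - k) + (n + 1 + k) by omega), pow_add, pow_succ]
    linear_combination (-((-1 : ℝ) ^ k * ((m + n + 1).choose (n + 1 + k) : ℝ) *
      BPoly (m - k) (x + y₂) * BPoly (n + 1 + k) (x + y₁))) * hn
  rw [s1, s2, sub_neg_eq_add, ← mul_add, h, pow_succ, pow_add]
  push_cast
  linear_combination ((-1 : ℝ) ^ m * ((m : ℝ) + n + 1) * (y₂ - y₁) * BPoly (m + n) (y₁ - y₂)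
        + (-1 : ℝ) ^ m * ((m : ℝ) + n) * BPoly (m + n + 1) (y₁ - y₂)) * hn
end

section
/- Let r ≥ 1 and n₁, …, n_r ≥ 0 be integers with n₁+⋯+n_r even, let q be a nonzero real number, and let y₁, …, y_r be real numbers with y_l ≠ 1/2 for all l. Then (1/(n₁!⋯n_r!))·∫_0^q B_{n₁}( ((1−2y₁)/q)·z + y₁ ) ⋯ B_{n_r}( ((1−2y_r)/q)·z + y_r ) dz = −2q · Σ_{a=0}^{n₁+⋯+n_{r−1}} (−1)^a · ( (1−2y_r)^{−a−1} / (n_r+a+1)! ) · B_{n_r+a+1}(y_r) · Σ_{j₁+⋯+j_{r−1}=a, 0≤j_l≤n_l} ( a!/(j₁!⋯j_{r−1}!) ) · ∏_{l=1}^{r−1} ( (1−2y_l)^{j_l} / (n_l−j_l)! ) · B_{n_l−j_l}(y_l). -/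
open Finset

open Polynomial in
/-- Normalised Bernoulli polynomial `B_n((1-2y) X + y) / n!`. -/
noncomputable def fB (n : ℕ) (y : ℝ) : ℝ[X] :=
  C (1 / (n.factorial : ℝ)) *
    ((Polynomial.bernoulli n).map (algebraMap ℚ ℝ)).comp (C (1 - 2 * y) * X + C y)

open Polynomial in
lemma fB_eval (n : ℕ) (y t : ℝ) :
    (fB n y).eval t = 1 / (n.factorial : ℝ) * BPoly n ((1 - 2 * y) * t + y) := by
  simp [fB, BPoly, eval_comp]

open Polynomial in
lemma fB_derivative (n : ℕ) (y : ℝ) :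
    derivative (fB (n + 1) y) = C (1 - 2 * y) * fB n y := by
  have h : (((n + 1).factorial : ℕ) : ℝ) ≠ 0 := by positivity
  have h2 : ((n.factorial : ℕ) : ℝ) ≠ 0 := by positivity
  have h3 : (C (1 / ((n + 1).factorial : ℝ)) : ℝ[X]) * ((n : ℝ[X]) + 1)
      = C (1 / (n.factorial : ℝ)) := by
    have : ((n : ℝ[X]) + 1) = C ((n : ℝ) + 1) := by simp
    rw [this, ← C_mul, Nat.factorial_succ]
    congr 1
    push_cast
    field_simp
  unfold fB
  rw [derivative_C_mul, derivative_comp, derivative_map, derivative_bernoulli_add_one, ← h3]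
  simp
  ring

open Polynomial in
lemma fB_comp (n : ℕ) (y : ℝ) : (fB n y).comp (1 - X) = (-1) ^ n * fB n y := by
  have h := congrArg (fun p : ℚ[X] => p.map (algebraMap ℚ ℝ)) (bernoulli_comp_one_sub_X n)
  simp only [Polynomial.map_comp, Polynomial.map_mul, Polynomial.map_pow, Polynomial.map_sub,
    Polynomial.map_neg, Polynomial.map_one, map_X] at h
  have h2 := congrArg (fun p : ℝ[X] => p.comp (C (1 - 2 * y) * X + C y)) h
  simp only [comp_assoc, mul_comp, pow_comp, neg_comp, one_comp, sub_comp, X_comp] at h2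
  unfold fB
  simp only [mul_comp, C_comp, comp_assoc, add_comp, X_comp]
  have e : (C (1 - 2 * y) * (1 - X) + C y : ℝ[X]) = 1 - (C (1 - 2 * y) * X + C y) := by
    have htwo : (C 2 : ℝ[X]) = 2 := rfl
    simp only [C_sub, C_mul, C_1, htwo]
    ring
  rw [e, h2]
  ring

open Polynomial in
lemma fB_natDegree (n : ℕ) (y : ℝ) : (fB n y).natDegree ≤ n := by
  have hb : (Polynomial.bernoulli n).natDegree ≤ n := by
    rw [natDegree_le_iff_coeff_eq_zero]
    intro N hN
    rw [coeff_bernoulli]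
    simp [Nat.not_le.mpr hN]
  unfold fB
  refine (natDegree_C_mul_le _ _).trans (natDegree_comp_le.trans ?_)
  have h1 := (natDegree_map_le (f := algebraMap ℚ ℝ) (p := Polynomial.bernoulli n)).trans hb
  have h2 : (C (1 - 2 * y) * X + C y : ℝ[X]).natDegree ≤ 1 := natDegree_linear_le
  simpa using Nat.mul_le_mul h1 h2

open Polynomial in
lemma fB_iterate (j n : ℕ) (y : ℝ) :
    derivative^[j] (fB (n + j) y) = C ((1 - 2 * y) ^ j) * fB n y := by
  induction j with
  | zero => simp
  | succ j ih =>
    rw [Function.iterate_succ_apply, ← add_assoc, fB_derivative, iterate_derivative_C_mul, ih,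
      ← mul_assoc, ← C_mul, pow_succ']

open Polynomial in
lemma fB_coeff (j n : ℕ) (hj : j ≤ n) (y : ℝ) :
    (fB n y).coeff j = 1 / (j.factorial : ℝ) *
      ((1 - 2 * y) ^ j / ((n - j).factorial : ℝ) * BPoly (n - j) y) := by
  have h := fB_iterate j (n - j) y
  rw [Nat.sub_add_cancel hj] at h
  have h1 := congrArg (fun p : ℝ[X] => p.coeff 0) h
  simp only [coeff_iterate_derivative, coeff_C_mul, zero_add, Nat.descFactorial_self,
    nsmul_eq_mul] at h1
  rw [coeff_zero_eq_eval_zero, fB_eval] at h1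
  have h2 : ((j.factorial : ℕ) : ℝ) ≠ 0 := by positivity
  simp only [mul_zero, zero_add] at h1
  field_simp
  field_simp at h1
  linarith

open Polynomial in
lemma prod_coeff (m : ℕ) (n : Fin m → ℕ) (y : Fin m → ℝ) (a : ℕ) :
    (∏ l, fB (n l) (y l)).coeff a =
      ∑ j ∈ (Fintype.piFinset fun l : Fin m => Finset.range (n l + 1)).filter
            (fun j => ∑ l, j l = a), ∏ l, (fB (n l) (y l)).coeff (j l) := by
  have h : ∀ l, fB (n l) (y l) =
      ∑ j ∈ Finset.range (n l + 1), monomial j ((fB (n l) (y l)).coeff j) := fun l =>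
    as_sum_range' _ _ (Nat.lt_succ_of_le (fB_natDegree _ _))
  have hm : ∀ (s : Finset (Fin m)) (j : Fin m → ℕ) (g : Fin m → ℝ),
      ∏ l ∈ s, monomial (j l) (g l) = monomial (∑ l ∈ s, j l) (∏ l ∈ s, g l) := by
    intro s j g
    induction s using Finset.induction_on with
    | empty => simp
    | insert i s hi ih => rw [prod_insert hi, ih, sum_insert hi, prod_insert hi,
        monomial_mul_monomial]
  rw [Finset.prod_congr rfl (fun l _ => h l), Finset.prod_univ_sum, finsetSum_coeff, sum_filter]
  refine sum_congr rfl fun j _ => ?_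
  rw [hm, coeff_monomial]

open Polynomial in
/-- Antiderivative obtained by repeated integration by parts. -/
noncomputable def FB (P : ℝ[X]) (n : ℕ) (y : ℝ) (K : ℕ) : ℝ[X] :=
  ∑ a ∈ Finset.range K, C ((-1) ^ a * ((1 - 2 * y) ^ (a + 1))⁻¹) *
    (derivative^[a] P * fB (n + a + 1) y)

open Polynomial in
lemma FB_derivative (P : ℝ[X]) (n : ℕ) (y : ℝ) (hy : 1 - 2 * y ≠ 0) (K : ℕ) :
    derivative (FB P n y K) = P * fB n y -
      C ((-1) ^ K * ((1 - 2 * y) ^ K)⁻¹) * (derivative^[K] P * fB (n + K) y) := by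
  induction K with
  | zero => simp [FB]
  | succ K ih =>
    have e : C ((-1) ^ K * ((1 - 2 * y) ^ (K + 1))⁻¹) * C (1 - 2 * y) =
      C ((-1) ^ K * ((1 - 2 * y) ^ K)⁻¹) := by
      rw [← C_mul]
      congr 1
      field_simp
      ring
    have e2 : C ((-1) ^ (K + 1) * ((1 - 2 * y) ^ (K + 1))⁻¹) =
      - C ((-1) ^ K * ((1 - 2 * y) ^ (K + 1))⁻¹) := by
      rw [← C_neg]
      congr 1
      ring
    rw [FB, sum_range_succ, derivative_add, ← FB, ih, derivative_C_mul, derivative_mul,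
      fB_derivative, Function.iterate_succ_apply', e2, ← e, ← add_assoc]
    ring

open Polynomial in
lemma FB_eval_one (P : ℝ[X]) (N n : ℕ) (y : ℝ) (hP : P.comp (1 - X) = (-1) ^ N * P)
    (hN : Even (N + n)) (K : ℕ) : (FB P n y K).eval 1 = - (FB P n y K).eval 0 := by
  simp only [FB, eval_finsetSum, ← sum_neg_distrib]
  refine sum_congr rfl fun a _ => ?_
  have h1 := iterate_derivative_comp_one_sub_X P a
  have hC : ((-1) ^ N : ℝ[X]) = C ((-1) ^ N) := by simp
  rw [hP, hC, iterate_derivative_C_mul] at h1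
  have h2 := congrArg (eval 0) h1
  have h3 := congrArg (eval 0) (fB_comp (n + a + 1) y)
  simp [eval_comp] at h2 h3
  have h4 : (eval 1 (derivative^[a] P)) = (-1) ^ a * ((-1) ^ N * eval 0 (derivative^[a] P)) := by
    rw [h2, ← mul_assoc, ← mul_pow]
    simp
  simp only [eval_mul, eval_C]
  rw [h3, h4]
  have h5 : ((-1 : ℝ) ^ a * (-1) ^ N * (-1) ^ (n + a + 1)) = -1 := by
    rw [← pow_add, ← pow_add]
    apply Odd.neg_one_pow
    grind
  linear_combination ((-1) ^ a * ((1 - 2 * y) ^ (a + 1))⁻¹ * eval 0 (derivative^[a] P) *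
    eval 0 (fB (n + a + 1) y)) * h5

/-- Evaluation of the special product integral (17b): the case where `n₁ + ⋯ + n_r` is even,
for `r = m + 1` factors. -/
theorem integral_prod_bernoulli_special_eq (m : ℕ) (n : Fin (m + 1) → ℕ)
    (heven : Even (∑ l, n l)) (q : ℝ) (hq : q ≠ 0) (y : Fin (m + 1) → ℝ)
    (hy : ∀ l, y l ≠ 1 / 2) :
    (1 / ∏ l, ((n l).factorial : ℝ)) *
        ∫ z in (0 : ℝ)..q, ∏ l, BPoly (n l) ((1 - 2 * y l) / q * z + y l) =
      -2 * q * ∑ a ∈ Finset.range ((∑ l : Fin m, n l.castSucc) + 1), (-1 : ℝ) ^ a *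
        ((1 - 2 * y (Fin.last m)) ^ (-(a : ℤ) - 1) / ((n (Fin.last m) + a + 1).factorial : ℝ)) *
        BPoly (n (Fin.last m) + a + 1) (y (Fin.last m)) *
        ∑ j ∈ (Fintype.piFinset fun l : Fin m => Finset.range (n l.castSucc + 1)).filter
            (fun j => ∑ l, j l = a),
          ((a.factorial : ℝ) / ∏ l, ((j l).factorial : ℝ)) *
            ∏ l : Fin m, (1 - 2 * y l.castSucc) ^ j l / ((n l.castSucc - j l).factorial : ℝ) *
              BPoly (n l.castSucc - j l) (y l.castSucc) := by
  set c := 1 - 2 * y (Fin.last m) with hc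
  have hc0 : 1 - 2 * y (Fin.last m) ≠ 0 := by
    intro h
    exact hy (Fin.last m) (by linarith)
  set P : Polynomial ℝ := ∏ l : Fin m, fB (n l.castSucc) (y l.castSucc) with hPdef
  set N := ∑ l : Fin m, n l.castSucc with hNdef
  have hPdeg : P.natDegree ≤ N :=
    (Polynomial.natDegree_prod_le _ _).trans (sum_le_sum fun l _ => fB_natDegree _ _)
  have hPsym : P.comp (1 - Polynomial.X) = (-1) ^ N * P := by
    rw [hPdef, Polynomial.prod_comp, hNdef, ← prod_pow_eq_pow_sum, ← prod_mul_distrib]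
    exact prod_congr rfl fun l _ => fB_comp _ _
  have hN : Even (N + n (Fin.last m)) := by
    rw [Fin.sum_univ_castSucc] at heven
    exact heven
  set F := FB P (n (Fin.last m)) (y (Fin.last m)) (N + 1) with hF
  have hFd : Polynomial.derivative F = P * fB (n (Fin.last m)) (y (Fin.last m)) := by
    rw [hF, FB_derivative _ _ _ hc0,
      Polynomial.iterate_derivative_eq_zero (Nat.lt_succ_of_le hPdeg)]
    simp
  have hF1 : F.eval 1 = - F.eval 0 := FB_eval_one P N _ _ hPsym hN _
  have hint : (∫ z in (0 : ℝ)..q, (P * fB (n (Fin.last m)) (y (Fin.last m))).eval (z / q)) =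
      -2 * q * F.eval 0 := by
    have hd : ∀ z ∈ Set.uIcc (0 : ℝ) q, HasDerivAt (fun z => q * F.eval (z / q))
        ((P * fB (n (Fin.last m)) (y (Fin.last m))).eval (z / q)) z := by
      intro z _
      have h1 := (F.hasDerivAt (z / q)).comp z ((hasDerivAt_id z).div_const q)
      have h2 := h1.const_mul q
      rw [hFd] at h2
      convert! h2 using 1
      field_simp
    rw [intervalIntegral.integral_eq_sub_of_hasDerivAt hd]
    · rw [div_self hq, hF1]
      simp
      ring
    · apply Continuous.intervalIntegrable
      exact (Polynomial.continuous _).comp (continuous_id.div_const q)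
  have hL : (1 / ∏ l, ((n l).factorial : ℝ)) *
        ∫ z in (0 : ℝ)..q, ∏ l, BPoly (n l) ((1 - 2 * y l) / q * z + y l) =
      ∫ z in (0 : ℝ)..q, (P * fB (n (Fin.last m)) (y (Fin.last m))).eval (z / q) := by
    rw [← intervalIntegral.integral_const_mul]
    congr 1
    ext z
    have : P * fB (n (Fin.last m)) (y (Fin.last m)) = ∏ l, fB (n l) (y l) := by
      rw [Fin.prod_univ_castSucc]
    rw [this, Polynomial.eval_prod, one_div, ← prod_inv_distrib, ← prod_mul_distrib]
    refine prod_congr rfl fun l _ => ?_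
    rw [fB_eval, one_div]
    congr 3
    ring
  rw [hL, hint]
  congr 1
  rw [hF, FB, Polynomial.eval_finsetSum]
  refine sum_congr rfl fun a _ => ?_
  have hcoef : (Polynomial.derivative^[a] P).eval 0 =
      ∑ j ∈ (Fintype.piFinset fun l : Fin m => Finset.range (n l.castSucc + 1)).filter
            (fun j => ∑ l, j l = a),
          ((a.factorial : ℝ) / ∏ l, ((j l).factorial : ℝ)) *
            ∏ l : Fin m, (1 - 2 * y l.castSucc) ^ j l / ((n l.castSucc - j l).factorial : ℝ) *
              BPoly (n l.castSucc - j l) (y l.castSucc) := by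
    rw [← Polynomial.coeff_zero_eq_eval_zero, Polynomial.coeff_iterate_derivative, zero_add,
      Nat.descFactorial_self, nsmul_eq_mul, hPdef,
      prod_coeff m (fun l => n l.castSucc) (fun l => y l.castSucc), mul_sum]
    refine sum_congr rfl fun j hj => ?_
    rw [mem_filter, Fintype.mem_piFinset] at hj
    rw [div_eq_mul_inv, mul_assoc, ← prod_inv_distrib, ← prod_mul_distrib]
    congr 1
    refine prod_congr rfl fun l _ => ?_
    have := hj.1 l
    rw [mem_range] at this
    rw [fB_coeff _ _ (by omega), one_div]
  rw [← hcoef]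
  simp only [Polynomial.eval_mul, Polynomial.eval_C, fB_eval, mul_zero, zero_add]
  have hz : c ^ (-(a : ℤ) - 1) = (c ^ (a + 1))⁻¹ := by
    rw [← zpow_natCast, ← zpow_neg]
    congr 1
    push_cast
    ring
  rw [hz]
  ring
end

section
/- Let m, n ≥ 1 be integers, let χ₁, χ₂ be non-principal primitive Dirichlet characters of moduli k₁ and k₂ respectively, let b₁, b₂ be nonzero real numbers, and let x, y₁, y₂ be real numbers. Then Σ_{a=0}^{n} (−1)^a·C(m+n+1, n−a)·b₁^a·b₂^{−a−1}·B_{n−a,χ₁}(b₁x+y₁)·B_{m+a+1,χ₂}(b₂x+y₂) − Σ_{a=0}^{m} (−1)^a·C(m+n+1, m−a)·b₂^a·b₁^{−a−1}·B_{m−a,χ₂}(b₂x+y₂)·B_{n+a+1,χ₁}(b₁x+y₁) = ((−1)^{m+1}/(b₁^{m+1}·b₂^{n+1})) · Σ_{a=0}^{m+n+1} (−1)^a·C(m+n+1, a)·b₁^a·b₂^{m+n+1−a}·B_{m+n+1−a,χ₁}(y₁)·B_{a,χ₂}(y₂). -/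
open Finset

/-- The generalized Bernoulli polynomial `B_{n,χ}(x) = k^{n−1} Σ_{a=0}^{k−1} χ̄(a) Bₙ((a+x)/k)`. -/
noncomputable def BPolyChar {k : ℕ} (χ : DirichletCharacter ℂ k) (n : ℕ) (x : ℝ) : ℂ :=
  (k : ℂ) ^ ((n : ℤ) - 1) *
    ∑ a ∈ Finset.range k, (starRingEnd ℂ) (χ (a : ZMod k)) * ((BPoly n (((a : ℝ) + x) / k)) : ℂ)

lemma hasDerivAt_BPoly (n : ℕ) (x : ℝ) : HasDerivAt (BPoly n) (n * BPoly (n - 1) x) x := by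
  have h := ((Polynomial.bernoulli n).map (algebraMap ℚ ℝ)).hasDerivAt x
  rw [Polynomial.derivative_map, Polynomial.derivative_bernoulli] at h
  refine h.congr_deriv ?_
  simp [BPoly]

lemma hasDerivAt_BPolyChar {k : ℕ} [NeZero k] (χ : DirichletCharacter ℂ k) (n : ℕ) (b y x : ℝ) :
    HasDerivAt (fun x : ℝ => BPolyChar χ n (b * x + y))
      (n * b * BPolyChar χ (n - 1) (b * x + y)) x := by
  have hk : (k : ℝ) ≠ 0 := by exact_mod_cast NeZero.ne k
  have hk' : (k : ℂ) ≠ 0 := by exact_mod_cast NeZero.ne k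
  have key : ∀ a : ℕ, HasDerivAt (fun x : ℝ => ((BPoly n (((a : ℝ) + (b * x + y)) / k) : ℝ) : ℂ))
      (((n * BPoly (n - 1) (((a : ℝ) + (b * x + y)) / k) * (b / k) : ℝ)) : ℂ) x := by
    intro a
    have h1 : HasDerivAt (fun x : ℝ => ((a : ℝ) + (b * x + y)) / k) (b / k) x := by
      have := ((((hasDerivAt_id x).const_mul b).add_const y).const_add (a : ℝ)).div_const (k : ℝ)
      simpa using this
    exact ((hasDerivAt_BPoly n _).comp x h1).ofReal_comp
  unfold BPolyChar
  have h := (HasDerivAt.fun_sum (u := Finset.range k) (fun a _ =>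
    (key a).const_mul ((starRingEnd ℂ) (χ (a : ZMod k))))).const_mul ((k : ℂ) ^ ((n : ℤ) - 1))
  refine h.congr_deriv ?_
  symm
  rcases n with _ | n
  · simp
  · rw [Finset.mul_sum, Finset.mul_sum, Finset.mul_sum]
    refine Finset.sum_congr rfl fun a _ => ?_
    have : (k : ℂ) ^ (((n + 1 : ℕ) : ℤ) - 1) = (k : ℂ) ^ (((n + 1 - 1 : ℕ) : ℤ) - 1) * k := by
      rw [← zpow_add_one₀ hk']
      congr 1
      push_cast
      simp
    rw [this]
    push_cast
    field_simp

lemma appell_const (P Q : ℕ → ℝ → ℂ) (b c : ℂ)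
    (hP : ∀ j x, HasDerivAt (P j) (j * b * P (j - 1) x) x)
    (hQ : ∀ j x, HasDerivAt (Q j) (j * c * Q (j - 1) x) x) (M : ℕ) (x y : ℝ) :
    ∑ j ∈ Finset.range (M + 2), (-1 : ℂ) ^ j * ((M + 1).choose j : ℂ) * b ^ (M + 1 - j) * c ^ j *
        (P j x * Q (M + 1 - j) x) =
    ∑ j ∈ Finset.range (M + 2), (-1 : ℂ) ^ j * ((M + 1).choose j : ℂ) * b ^ (M + 1 - j) * c ^ j *
        (P j y * Q (M + 1 - j) y) := by
  have hd : ∀ x, HasDerivAt (fun x => ∑ j ∈ Finset.range (M + 2),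
      (-1 : ℂ) ^ j * ((M + 1).choose j : ℂ) * b ^ (M + 1 - j) * c ^ j *
        (P j x * Q (M + 1 - j) x)) 0 x := by
    intro x
    have h := HasDerivAt.fun_sum (u := Finset.range (M + 2)) (fun j _ =>
      ((hP j x).mul (hQ (M + 1 - j) x)).const_mul
        ((-1 : ℂ) ^ j * ((M + 1).choose j : ℂ) * b ^ (M + 1 - j) * c ^ j))
    refine h.congr_deriv ?_
    simp only [mul_add, Finset.sum_add_distrib]
    rw [Finset.sum_range_succ', Finset.sum_range_succ (n := M + 1)]
    simp only [Nat.cast_zero, zero_mul, mul_zero, add_zero, Nat.sub_self]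
    rw [← Finset.sum_add_distrib]
    refine Finset.sum_eq_zero fun j hj => ?_
    obtain ⟨d, rfl⟩ : ∃ d, M = j + d := ⟨M - j, by have := Finset.mem_range.1 hj; omega⟩
    have e1 : j + d + 1 - (j + 1) = d := by omega
    have e2 : j + d + 1 - j = d + 1 := by omega
    have hc := Nat.choose_succ_right_eq (j + d + 1) j
    rw [e2] at hc
    have hc' : ((j + d + 1).choose (j + 1) : ℂ) * ((j : ℂ) + 1)
        = ((j + d + 1).choose j : ℂ) * ((d : ℂ) + 1) := by exact_mod_cast hc
    rw [e1, e2]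
    simp only [Nat.add_sub_cancel]
    push_cast
    linear_combination (-(-1 : ℂ) ^ j * b ^ (d + 1) * c ^ (j + 1) * P j x * Q d x) * hc'
  exact is_const_of_deriv_eq_zero (fun x => (hd x).differentiableAt) (fun x => (hd x).deriv) x y



/-- Reciprocity relation for generalized Bernoulli polynomials (identity (36)). -/
theorem generalized_bernoulli_reciprocity (m n : ℕ) (hm : 1 ≤ m) (hn : 1 ≤ n)
    (k₁ k₂ : ℕ) [NeZero k₁] [NeZero k₂]
    (χ₁ : DirichletCharacter ℂ k₁) (χ₂ : DirichletCharacter ℂ k₂)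
    (h₁ : χ₁ ≠ 1) (h₂ : χ₂ ≠ 1) (hprim₁ : χ₁.IsPrimitive) (hprim₂ : χ₂.IsPrimitive)
    (b₁ b₂ : ℝ) (hb₁ : b₁ ≠ 0) (hb₂ : b₂ ≠ 0) (x y₁ y₂ : ℝ) :
    (∑ a ∈ Finset.range (n + 1), (-1 : ℂ) ^ a * (Nat.choose (m + n + 1) (n - a) : ℂ) *
          (b₁ : ℂ) ^ a * (b₂ : ℂ) ^ (-(a : ℤ) - 1) * BPolyChar χ₁ (n - a) (b₁ * x + y₁) *
          BPolyChar χ₂ (m + a + 1) (b₂ * x + y₂))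
      - (∑ a ∈ Finset.range (m + 1), (-1 : ℂ) ^ a * (Nat.choose (m + n + 1) (m - a) : ℂ) *
          (b₂ : ℂ) ^ a * (b₁ : ℂ) ^ (-(a : ℤ) - 1) * BPolyChar χ₂ (m - a) (b₂ * x + y₂) *
          BPolyChar χ₁ (n + a + 1) (b₁ * x + y₁)) =
      ((-1 : ℂ) ^ (m + 1) / ((b₁ : ℂ) ^ (m + 1) * (b₂ : ℂ) ^ (n + 1))) *
        ∑ a ∈ Finset.range (m + n + 2), (-1 : ℂ) ^ a * (Nat.choose (m + n + 1) a : ℂ) *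
          (b₁ : ℂ) ^ a * (b₂ : ℂ) ^ (m + n + 1 - a) * BPolyChar χ₁ (m + n + 1 - a) y₁ *
          BPolyChar χ₂ a y₂ := by
  have hb₁' : (b₁ : ℂ) ≠ 0 := by exact_mod_cast hb₁
  have hb₂' : (b₂ : ℂ) ≠ 0 := by exact_mod_cast hb₂
  have key := appell_const (fun j x => BPolyChar χ₁ j (b₁ * x + y₁))
    (fun j x => BPolyChar χ₂ j (b₂ * x + y₂)) b₁ b₂
    (fun j x => hasDerivAt_BPolyChar χ₁ j b₁ y₁ x)
    (fun j x => hasDerivAt_BPolyChar χ₂ j b₂ y₂ x) (m + n) x 0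
  simp only [mul_zero, zero_add] at key
  have hR : ∑ a ∈ Finset.range (m + n + 2), (-1 : ℂ) ^ a * (Nat.choose (m + n + 1) a : ℂ) *
          (b₁ : ℂ) ^ a * (b₂ : ℂ) ^ (m + n + 1 - a) * BPolyChar χ₁ (m + n + 1 - a) y₁ *
          BPolyChar χ₂ a y₂ = (-1 : ℂ) ^ (m + n + 1) *
      ∑ j ∈ Finset.range (m + n + 2), (-1 : ℂ) ^ j * ((m + n + 1).choose j : ℂ) *
        (b₁ : ℂ) ^ (m + n + 1 - j) * (b₂ : ℂ) ^ j *
        (BPolyChar χ₁ j y₁ * BPolyChar χ₂ (m + n + 1 - j) y₂) := by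
    rw [← Finset.sum_range_reflect, Finset.mul_sum]
    refine Finset.sum_congr rfl fun j hj => ?_
    have hj' := Finset.mem_range.1 hj
    have e1 : m + n + 2 - 1 - j = m + n + 1 - j := by omega
    have e2 : m + n + 1 - (m + n + 1 - j) = j := by omega
    have e3 : (-1 : ℂ) ^ (m + n + 1) = (-1) ^ (m + n + 1 - j) * (-1) ^ j := by
      rw [← pow_add]; congr 1; omega
    have e4 : (-1 : ℂ) ^ j * (-1) ^ j = 1 := by rw [← mul_pow]; simp
    rw [e1, e2, e3, Nat.choose_symm (by omega)]
    linear_combination (-((-1 : ℂ) ^ (m + n + 1 - j) * ((m + n + 1).choose j : ℂ) *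
        (b₁ : ℂ) ^ (m + n + 1 - j) * (b₂ : ℂ) ^ j *
        (BPolyChar χ₁ j y₁ * BPolyChar χ₂ (m + n + 1 - j) y₂))) * e4
  rw [hR, ← key, show m + n + 2 = (n + 1) + (m + 1) by ring, Finset.sum_range_add _ (n + 1) (m + 1),
    mul_add, mul_add, sub_eq_add_neg]
  have hs : ∀ j : ℕ, (-1 : ℂ) ^ j * (-1) ^ j = 1 := fun j => by rw [← mul_pow]; simp
  congr 1
  · rw [← Finset.sum_range_reflect, Finset.mul_sum, Finset.mul_sum]
    refine Finset.sum_congr rfl fun j hj => ?_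
    obtain ⟨d, rfl⟩ : ∃ d, n = j + d := ⟨n - j, by have := Finset.mem_range.1 hj; omega⟩
    have e1 : j + d + 1 - 1 - j = d := by omega
    have e2 : j + d - d = j := by omega
    have e3 : m + (j + d) + 1 - j = m + d + 1 := by omega
    rw [e1, e2, e3, show -(d : ℤ) - 1 = -((d + 1 : ℕ) : ℤ) by push_cast; ring, zpow_neg,
      zpow_natCast]
    have hm := hs m
    have hj := hs j
    field_simp
    ring_nf
    simp only [pow_mul, neg_one_sq, mul_comm _ 2, one_pow, mul_one, one_mul]
  · rw [← Finset.sum_neg_distrib, Finset.mul_sum, Finset.mul_sum]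
    refine Finset.sum_congr rfl fun a hj => ?_
    obtain ⟨d, rfl⟩ : ∃ d, m = a + d := ⟨m - a, by have := Finset.mem_range.1 hj; omega⟩
    have e1 : a + d - a = d := by omega
    have e3 : a + d + n + 1 - (n + 1 + a) = d := by omega
    have e4 : (a + d + n + 1).choose (n + 1 + a) = (a + d + n + 1).choose d := by
      rw [← Nat.choose_symm (by omega), e3]
    rw [e1, e3, e4, show -(a : ℤ) - 1 = -((a + 1 : ℕ) : ℤ) by push_cast; ring, zpow_neg,
      zpow_natCast, show n + 1 + a = n + a + 1 by ring]
    field_simp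
    ring_nf
    simp only [pow_mul, neg_one_sq, mul_comm _ 2, one_pow, mul_one, one_mul]
    have h3 : ((-1 : ℂ) ^ a) ^ 3 = (-1) ^ a := by
      rw [pow_succ, pow_two, hs, one_mul]
    rw [h3]
end
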